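/- (Thresholding estimator, univariate.) Suppose p = 1, Assumption 1 holds, the weights satisfy (W1) and (W2), m = m_n → ∞ with (m*)³/n_* → 0, and Assumption 2 holds: g : ℝ × [0,∞) → [0,1] is a measurable function and c_n(j) ≥ 0 are thresholds such that E[g(γ̂_n(j), c_n(j))] → 1 as n → ∞, for each j ∈ ℤ^q. Then the thresholding estimator σ̂²_{n,th} = ∑_{|j|≤m} w_m(j) γ̂_n(j) g(γ̂_n(j), c_n(j)) is weakly consistent for σ²: σ̂²_{n,th} → σ² in probability as n → ∞. -/

import Mathlib

/-!
Write `γ̂ = γ̂_n(j)`, `γ = γ(j)` and `g = g(γ̂, c_n(j))`. The error of the estimator splits as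
`σ̂² - σ² = ∑ w (γ̂ - γ) g - ∑ w γ (1 - g) + (∑ w γ - σ²)`, with sums over the lags `|j| ≤ m`.
Since `|w| ≤ C` and `0 ≤ g ≤ 1`, Markov's inequality reduces the theorem to three limits.

* `∑ E|γ̂ - γ| → 0`. The φ-mixing covariance inequality (`cov_le`) bounds the covariance of
  `ξ_i ξ_{i+j}` and `ξ_{i'} ξ_{i'+j}` by a constant times `φ(|i' - i| - m)^{1/2}`
  (`abs_cov_lag_le`). Counting lattice points on spheres (`exists_sum_radial_le`) turns the
  summability of `r^{q-1} φ(r)^{1/2}` into the bound `O((m+1)^q)` for the sum over `i'`, so that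
  `E(γ̂ - γ)² = O((m / n)^q)` uniformly in `j` (`exists_integral_acovHat1_sub_sq_le`). There are
  `O(m^q)` lags, and the total is `O((m³ / n)^{q/2})` (`exists_sum_integral_abs_le`).
* `∑ |γ| (1 - E g) → 0`, by dominated convergence: each `E g` tends to `1`, and `∑ |γ(j)|` is
  finite by the same covariance inequality (`summable_abs_acov1`).
* `∑ w γ → σ²`, by dominated convergence again.

The covariance inequality is proved as follows. For `X` with finitely
many values, `Cov(X, Y) = ∑ x E[Y h_x]` with `h_x = P(X = x | m2) - P(X = x)`, where
`E|h_x| ≤ 2 φ P(X = x)` and `∑ |h_x| ≤ 2`. Young's inequality with a parameter `t` then gives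
`|Cov(X, Y)| ≤ t φ E X² + t⁻¹ E Y²`, and a simple-function approximation removes the restriction
on `X`.
-/

open MeasureTheory Filter Finset Topology

noncomputable section

variable {Ω : Type*}

/-- σ-algebra generated by the field at sites whose `j`-th coordinate is `≤ r`. -/
def sigmaLE {d : ℕ} {E : Type*} [MeasurableSpace Ω] [MeasurableSpace E]
    (ξ : (Fin d → ℤ) → Ω → E) (j : Fin d) (r : ℤ) : MeasurableSpace Ω :=
  ⨆ i ∈ {i : Fin d → ℤ | i j ≤ r}, MeasurableSpace.comap (ξ i) inferInstance

/-- σ-algebra generated by the field at sites whose `j`-th coordinate is `≥ r`. -/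
def sigmaGE {d : ℕ} {E : Type*} [MeasurableSpace Ω] [MeasurableSpace E]
    (ξ : (Fin d → ℤ) → Ω → E) (j : Fin d) (r : ℤ) : MeasurableSpace Ω :=
  ⨆ i ∈ {i : Fin d → ℤ | r ≤ i j}, MeasurableSpace.comap (ξ i) inferInstance

/-- φ-mixing coefficient in direction `j` at distance `r`. -/
def phiCoeff [MeasurableSpace Ω] {d : ℕ} {E : Type*} [MeasurableSpace E]
    (ξ : (Fin d → ℤ) → Ω → E) (P : Measure Ω) (j : Fin d) (r : ℤ) : ℝ :=
  sSup {x | ∃ A B : Set Ω, MeasurableSet[sigmaLE ξ j 0] A ∧ MeasurableSet[sigmaGE ξ j r] B ∧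
    P A ≠ 0 ∧ x = |(P (A ∩ B)).toReal / (P A).toReal - (P B).toReal|}

/-- The (half-space) φ-mixing coefficient `φ(r)`, with the convention `φ(r) = 1` for `r ≤ 0`. -/
def phiMix [MeasurableSpace Ω] {d : ℕ} {E : Type*} [MeasurableSpace E]
    (ξ : (Fin d → ℤ) → Ω → E) (P : Measure Ω) (r : ℤ) : ℝ :=
  if r ≤ 0 then 1 else ⨆ j : Fin d, phiCoeff ξ P j r

/-- Strict stationarity: all finite dimensional distributions are shift invariant. -/
def StrictStationary [MeasurableSpace Ω] {d : ℕ} {E : Type*} [MeasurableSpace E]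
    (ξ : (Fin d → ℤ) → Ω → E) (P : Measure Ω) : Prop :=
  ∀ t : Fin d → ℤ,
    Measure.map (fun ω => (fun i => ξ (i + t) ω)) P = Measure.map (fun ω => (fun i => ξ i ω)) P

/-- The index box `Γ_n = {1,…,n₁} × ⋯ × {1,…,n_d}`. -/
def box (d : ℕ) (n : Fin d → ℕ) : Finset (Fin d → ℤ) :=
  Finset.Icc 1 (fun i => (n i : ℤ))

/-- `Γ̃_n(j) = {i ∈ Γ_n : i + j ∈ Γ_n}`. -/
def boxJ (d : ℕ) (n : Fin d → ℕ) (j : Fin d → ℤ) : Finset (Fin d → ℤ) :=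
  (box d n).filter (fun i => i + j ∈ box d n)

/-- The lag window `{j : |j_i| ≤ m_i ∀ i}`. -/
def lags (d : ℕ) (m : Fin d → ℕ) : Finset (Fin d → ℤ) :=
  Finset.Icc (fun i => -(m i : ℤ)) (fun i => (m i : ℤ))

/-- Autocovariance matrix `γ(j) = E(ξ_0 ξ_jᵀ)`. -/
def acov [MeasurableSpace Ω] {d p : ℕ} (ξ : (Fin d → ℤ) → Ω → (Fin p → ℝ)) (P : Measure Ω)
    (j : Fin d → ℤ) : Fin p → Fin p → ℝ :=
  fun ν μ => ∫ ω, ξ 0 ω ν * ξ j ω μ ∂P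

/-- Sample autocovariance `γ̂_n(j)`. -/
def acovHat {d p : ℕ} (ξ : (Fin d → ℤ) → Ω → (Fin p → ℝ)) (n : Fin d → ℕ) (j : Fin d → ℤ)
    (ω : Ω) : Fin p → Fin p → ℝ :=
  fun ν μ => ((boxJ d n j).card : ℝ)⁻¹ * ∑ i ∈ boxJ d n j, ξ i ω ν * ξ (i + j) ω μ

/-- The estimator `σ̂²_n = ∑_{|j| ≤ m} w_m(j) γ̂_n(j)`. -/
def sigmaHat {d p : ℕ} (ξ : (Fin d → ℤ) → Ω → (Fin p → ℝ))
    (w : (Fin d → ℕ) → (Fin d → ℤ) → ℝ) (m n : Fin d → ℕ) (ω : Ω) : Fin p → Fin p → ℝ :=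
  ∑ j ∈ lags d m, w m j • acovHat ξ n j ω


/-- Autocovariance `γ(j) = E(ξ_0 ξ_j)` of a real-valued field. -/
def acov1 [MeasurableSpace Ω] {d : ℕ} (ξ : (Fin d → ℤ) → Ω → ℝ) (P : Measure Ω)
    (j : Fin d → ℤ) : ℝ :=
  ∫ ω, ξ 0 ω * ξ j ω ∂P

/-- Sample autocovariance `γ̂_n(j)` of a real-valued field. -/
def acovHat1 {d : ℕ} (ξ : (Fin d → ℤ) → Ω → ℝ) (n : Fin d → ℕ) (j : Fin d → ℤ) (ω : Ω) : ℝ :=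
  ((boxJ d n j).card : ℝ)⁻¹ * ∑ i ∈ boxJ d n j, ξ i ω * ξ (i + j) ω

/-- The covariance scheme `Σ(j,j') = ∑_{i ∈ ℤ^q} E[(ξ_0ξ_j − γ(j))(ξ_iξ_{i+j'} − γ(j'))]`. -/
def covY [MeasurableSpace Ω] {d : ℕ} (ξ : (Fin d → ℤ) → Ω → ℝ) (P : Measure Ω)
    (j k : Fin d → ℤ) : ℝ :=
  ∑' i : Fin d → ℤ,
    ∫ ω, (ξ 0 ω * ξ j ω - acov1 ξ P j) * (ξ i ω * ξ (i + k) ω - acov1 ξ P k) ∂P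

/-- `μ` is the law of a centered Gaussian vector with covariance scheme `S`:
every linear combination is a centered one-dimensional Gaussian with the induced variance. -/
def IsCenteredGaussianLaw {ι : Type*} [Fintype ι] (μ : Measure (ι → ℝ)) (S : ι → ι → ℝ) : Prop :=
  ∀ lam : ι → ℝ, μ.map (fun x => ∑ i, lam i * x i) =
    ProbabilityTheory.gaussianReal 0 (Real.toNNReal (∑ i, ∑ k, lam i * lam k * S i k))

/-! ### The covariance inequality for φ-mixing σ-algebras -/

/-- If `A` is φ-mixing against `m2`, then `P(A | m2)` is close to `P(A)` in `L¹`: split the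
integral over the set where `P(A | m2) ≥ P(A)`, which is itself in `m2`, and its complement. -/
lemma integral_abs_condExp_sub_le {m0 m2 : MeasurableSpace Ω} {P : Measure[m0] Ω}
    [IsProbabilityMeasure P] (hm2 : m2 ≤ m0) {A : Set Ω} (hA : MeasurableSet[m0] A) {φ : ℝ}
    (hφ : ∀ B, MeasurableSet[m2] B →
      |P.real (A ∩ B) - P.real A * P.real B| ≤ φ * P.real A) :
    ∫ ω, |(P[A.indicator (fun _ => (1 : ℝ)) | m2]) ω - P.real A| ∂P ≤ 2 * φ * P.real A := by
  set h : Ω → ℝ := fun ω => (P[A.indicator (fun _ => (1 : ℝ)) | m2]) ω - P.real A with hh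
  have hi1 : Integrable (A.indicator (fun _ => (1 : ℝ))) P := (integrable_const 1).indicator hA
  have hsm : StronglyMeasurable[m2] h :=
    stronglyMeasurable_condExp.sub stronglyMeasurable_const
  have hint : Integrable h P := integrable_condExp.sub (integrable_const _)
  have hset : ∀ B, MeasurableSet[m2] B →
      ∫ ω in B, h ω ∂P = P.real (A ∩ B) - P.real A * P.real B := by
    intro B hB
    rw [hh, integral_sub integrable_condExp.integrableOn (integrable_const _).integrableOn,
      setIntegral_condExp hm2 hi1 hB, integral_indicator_const _ hA]
    simp [Measure.real, Measure.restrict_apply hA, mul_comm]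
  have hBm : MeasurableSet[m2] {ω | 0 ≤ h ω} :=
    hsm.measurable measurableSet_Ici
  rw [← integral_add_compl (hm2 _ hBm) hint.abs]
  have e1 : ∫ ω in {ω | 0 ≤ h ω}, |h ω| ∂P = ∫ ω in {ω | 0 ≤ h ω}, h ω ∂P :=
    setIntegral_congr_fun (hm2 _ hBm) (fun ω hω => abs_of_nonneg hω)
  have e2 : ∫ ω in {ω | 0 ≤ h ω}ᶜ, |h ω| ∂P = - ∫ ω in {ω | 0 ≤ h ω}ᶜ, h ω ∂P := by
    rw [← integral_neg]
    exact setIntegral_congr_fun (hm2 _ hBm).compl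
      (fun ω hω => abs_of_neg (not_le.mp (by simpa using hω)))
  rw [e1, e2, hset _ hBm, hset _ hBm.compl]
  have := le_of_abs_le (hφ _ hBm)
  have := neg_le_of_abs_le (hφ _ hBm.compl)
  linarith

/-- The φ-mixing covariance inequality when `X` takes finitely many values. With
`h_x = P(X = x | m2) - P(X = x)`, the covariance is `∑ x ∫ Y h_x`; the weights satisfy
`∫ |h_x| ≤ 2 φ P(X = x)` and `∑ |h_x| ≤ 2`, which are used on the two terms of
`|x Y| ≤ (t x² + t⁻¹ Y²) / 2`. -/
lemma cov_le_of_finite_range {m0 m1 m2 : MeasurableSpace Ω} {P : Measure[m0] Ω}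
    [IsProbabilityMeasure P] (hm1 : m1 ≤ m0) (hm2 : m2 ≤ m0) {φ : ℝ}
    (hφ : ∀ A B, MeasurableSet[m1] A → MeasurableSet[m2] B →
      |P.real (A ∩ B) - P.real A * P.real B| ≤ φ * P.real A)
    {X Y : Ω → ℝ} (hX : Measurable[m1] X) (hXf : (Set.range X).Finite)
    (hY : Measurable[m2] Y) (hY2 : MemLp Y 2 P) {t : ℝ} (ht : 0 < t) :
    |∫ ω, X ω * Y ω ∂P - (∫ ω, X ω ∂P) * ∫ ω, Y ω ∂P| ≤
      t * φ * ∫ ω, X ω ^ 2 ∂P + t⁻¹ * ∫ ω, Y ω ^ 2 ∂P := by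
  classical
  set T := hXf.toFinset with hT
  set A : ℝ → Set Ω := fun x => X ⁻¹' {x} with hAdef
  have hA1 : ∀ x, MeasurableSet[m1] (A x) := fun x => hX (measurableSet_singleton x)
  have hA : ∀ x, MeasurableSet[m0] (A x) := fun x => hm1 _ (hA1 x)
  have hYi : Integrable Y P := hY2.integrable (by norm_num)
  have hY2i : Integrable (fun ω => Y ω ^ 2) P :=
    (memLp_two_iff_integrable_sq hY2.aestronglyMeasurable).1 hY2
  have hi1 : ∀ x, Integrable ((A x).indicator (fun _ => (1 : ℝ))) P :=
    fun x => (integrable_const 1).indicator (hA x)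
  -- every function of `X` is a combination of indicators of the level sets
  have hdec : ∀ (F : ℝ → ℝ) (ω : Ω),
      F (X ω) = ∑ x ∈ T, F x * (A x).indicator (fun _ => (1 : ℝ)) ω := by
    intro F ω
    rw [Finset.sum_eq_single (X ω)]
    · simp [hAdef]
    · intro b _ hb
      have : ω ∉ A b := fun h => hb (by simpa [hAdef] using h.symm)
      simp [this]
    · intro h
      exact absurd (by simp [hT]) h
  have hint : ∀ F : ℝ → ℝ, ∫ ω, F (X ω) ∂P = ∑ x ∈ T, F x * P.real (A x) := by
    intro F
    simp_rw [hdec F]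
    rw [integral_finsetSum _ (fun x _ => (hi1 x).const_mul _)]
    refine Finset.sum_congr rfl fun x _ => ?_
    rw [integral_const_mul, integral_indicator_const _ (hA x)]
    simp
  set h : ℝ → Ω → ℝ := fun x ω =>
    (P[(A x).indicator (fun _ => (1 : ℝ)) | m2]) ω - P.real (A x) with hh
  have hhi : ∀ x, Integrable (h x) P := fun x => integrable_condExp.sub (integrable_const _)
  have habs : ∀ x, ∫ ω, |h x ω| ∂P ≤ 2 * φ * P.real (A x) := fun x =>
    integral_abs_condExp_sub_le hm2 (hA x) (fun B hB => hφ _ _ (hA1 x) hB)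
  have hsum : ∀ᵐ ω ∂P, ∑ x ∈ T, |h x ω| ≤ 2 := by
    have hone : (∑ x ∈ T, (A x).indicator (fun _ => (1 : ℝ))) = fun _ => (1 : ℝ) := by
      funext ω
      have := hdec (fun _ => 1) ω
      simpa using this.symm
    have h1 := condExp_finsetSum (m := m2) (μ := P) (s := T) (fun x _ => hi1 x)
    rw [hone, condExp_const hm2] at h1
    have h2 : ∀ x ∈ T, ∀ᵐ ω ∂P, 0 ≤ (P[(A x).indicator (fun _ => (1 : ℝ)) | m2]) ω :=
      fun x _ => condExp_nonneg
        (Eventually.of_forall fun ω => Set.indicator_nonneg (fun _ _ => zero_le_one) ω)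
    have h2' := (Finset.eventually_all T).2 h2
    have h3 : ∑ x ∈ T, P.real (A x) = 1 := by
      have := hint (fun _ => 1)
      simpa using this.symm
    filter_upwards [h1, h2'] with ω e1 e2
    calc ∑ x ∈ T, |h x ω|
        ≤ ∑ x ∈ T, ((P[(A x).indicator (fun _ => (1 : ℝ)) | m2]) ω + P.real (A x)) := by
          refine Finset.sum_le_sum fun x hx => ?_
          have := e2 x hx
          have h0 : 0 ≤ P.real (A x) := measureReal_nonneg
          rw [hh, abs_le]
          constructor <;> linarith
      _ = 2 := by
          rw [Finset.sum_add_distrib, h3]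
          rw [Finset.sum_apply] at e1
          rw [← e1]; norm_num
  have hle2 : ∀ x ∈ T, ∀ᵐ ω ∂P, ‖h x ω‖ ≤ 2 := by
    intro x hx
    filter_upwards [hsum] with ω hω
    exact (Finset.single_le_sum (f := fun x => |h x ω|) (fun _ _ => abs_nonneg _) hx).trans hω
  have hYh : ∀ x ∈ T, Integrable (fun ω => Y ω * h x ω) P := fun x hx =>
    hYi.mul_bdd (hhi x).aestronglyMeasurable (hle2 x hx)
  have hYA : ∀ x, Integrable (fun ω => Y ω * (A x).indicator (fun _ => (1 : ℝ)) ω) P := by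
    intro x
    refine hYi.mul_bdd (c := 1) (hi1 x).aestronglyMeasurable (Eventually.of_forall fun ω => ?_)
    by_cases hω : ω ∈ A x <;> simp [hω]
  have hcov1 : ∀ x ∈ T, ∫ ω, Y ω * h x ω ∂P =
      ∫ ω, Y ω * (A x).indicator (fun _ => (1 : ℝ)) ω ∂P - P.real (A x) * ∫ ω, Y ω ∂P := by
    intro x hx
    have e := condExp_mul_of_stronglyMeasurable_left (m := m2) (μ := P) hY.stronglyMeasurable
      (hYA x) (hi1 x)
    have e' : ∫ ω, Y ω * (P[(A x).indicator (fun _ => (1 : ℝ)) | m2]) ω ∂P =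
        ∫ ω, Y ω * (A x).indicator (fun _ => (1 : ℝ)) ω ∂P := by
      exact (integral_congr_ae e).symm.trans (integral_condExp hm2)
    have hi : Integrable (fun ω => Y ω * (P[(A x).indicator (fun _ => (1 : ℝ)) | m2]) ω) P :=
      integrable_condExp.congr e
    rw [← e', mul_comm (P.real (A x)), ← integral_mul_const, ← integral_sub hi (hYi.mul_const _)]
    simp only [hh, mul_sub]
  have hcov : ∫ ω, X ω * Y ω ∂P - (∫ ω, X ω ∂P) * ∫ ω, Y ω ∂P =
      ∫ ω, ∑ x ∈ T, x * (Y ω * h x ω) ∂P := by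
    rw [integral_finsetSum _ (fun x hx => (hYh x hx).const_mul _)]
    have e1 : ∫ ω, X ω * Y ω ∂P =
        ∑ x ∈ T, x * ∫ ω, Y ω * (A x).indicator (fun _ => (1 : ℝ)) ω ∂P := by
      have : ∀ ω, X ω * Y ω =
          ∑ x ∈ T, x * (Y ω * (A x).indicator (fun _ => (1 : ℝ)) ω) := by
        intro ω
        conv_lhs => rw [hdec (fun x => x) ω, Finset.sum_mul]
        exact Finset.sum_congr rfl fun x _ => by ring
      simp_rw [this]
      rw [integral_finsetSum _ (fun x _ => (hYA x).const_mul _)]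
      simp_rw [integral_const_mul]
    rw [e1, hint (fun x => x), Finset.sum_mul, ← Finset.sum_sub_distrib]
    refine Finset.sum_congr rfl fun x hx => ?_
    rw [integral_const_mul, hcov1 x hx]; ring
  rw [hcov]
  have hbd : Integrable (fun ω =>
      (∑ x ∈ T, (t / 2 * x ^ 2) * |h x ω|) + t⁻¹ * Y ω ^ 2) P :=
    (integrable_finsetSum _ fun x _ => (hhi x).abs.const_mul _).add (hY2i.const_mul _)
  have hpt : ∀ᵐ ω ∂P, ‖∑ x ∈ T, x * (Y ω * h x ω)‖ ≤
      (∑ x ∈ T, (t / 2 * x ^ 2) * |h x ω|) + t⁻¹ * Y ω ^ 2 := by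
    filter_upwards [hsum] with ω hω
    calc ‖∑ x ∈ T, x * (Y ω * h x ω)‖ ≤ ∑ x ∈ T, ‖x * (Y ω * h x ω)‖ := norm_sum_le _ _
      _ ≤ ∑ x ∈ T, ((t / 2 * x ^ 2) * |h x ω| + (t⁻¹ / 2 * Y ω ^ 2) * |h x ω|) := by
          refine Finset.sum_le_sum fun x _ => ?_
          rw [Real.norm_eq_abs, ← mul_assoc, abs_mul, ← add_mul]
          refine mul_le_mul_of_nonneg_right ?_ (abs_nonneg _)
          have key : t / 2 * x ^ 2 + t⁻¹ / 2 * Y ω ^ 2 - |x * Y ω| =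
              t⁻¹ / 2 * (t * |x| - |Y ω|) ^ 2 := by
            rw [abs_mul, ← sq_abs x, ← sq_abs (Y ω)]
            field_simp
            ring
          have : 0 ≤ t⁻¹ / 2 * (t * |x| - |Y ω|) ^ 2 := by positivity
          linarith
      _ ≤ _ := by
          rw [Finset.sum_add_distrib, ← Finset.mul_sum]
          have : t⁻¹ / 2 * Y ω ^ 2 * ∑ x ∈ T, |h x ω| ≤ t⁻¹ / 2 * Y ω ^ 2 * 2 :=
            mul_le_mul_of_nonneg_left hω (by positivity)
          linarith
  refine (norm_integral_le_of_norm_le hbd hpt).trans ?_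
  rw [integral_add (integrable_finsetSum _ fun x _ => (hhi x).abs.const_mul _)
    (hY2i.const_mul _), integral_finsetSum _ (fun x _ => (hhi x).abs.const_mul _),
    integral_const_mul, hint (fun x => x ^ 2), Finset.mul_sum]
  gcongr with x hx
  rw [integral_const_mul]
  calc t / 2 * x ^ 2 * ∫ ω, |h x ω| ∂P ≤ t / 2 * x ^ 2 * (2 * φ * P.real (A x)) :=
        mul_le_mul_of_nonneg_left (habs x) (by positivity)
    _ = _ := by ring

/-- Finitely valued approximations of `f` dominated by `2 |f|`. -/
lemma exists_simple_approx [MeasurableSpace Ω] {f : Ω → ℝ} (hf : Measurable f) :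
    ∃ s : ℕ → Ω → ℝ, (∀ n, Measurable (s n)) ∧ (∀ n, (Set.range (s n)).Finite) ∧
      (∀ n ω, |s n ω| ≤ 2 * |f ω|) ∧ ∀ ω, Tendsto (fun n => s n ω) atTop (𝓝 (f ω)) := by
  refine ⟨fun n => SimpleFunc.approxOn f hf Set.univ 0 (Set.mem_univ _) n,
    fun n => SimpleFunc.measurable _, fun n => SimpleFunc.finite_range _, fun n ω => ?_,
    fun ω => SimpleFunc.tendsto_approxOn hf _ (by simp)⟩
  have := SimpleFunc.norm_approxOn_zero_le hf (Set.mem_univ (0 : ℝ)) ω n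
  rw [two_mul]
  exact this

/-- The covariance inequality for φ-mixing σ-algebras and square integrable variables, in the
form with a free parameter `t` (optimizing over `t` gives `2 φ^{1/2} ‖X‖₂ ‖Y‖₂`). -/
lemma cov_le {m0 m1 m2 : MeasurableSpace Ω} {P : Measure[m0] Ω}
    [IsProbabilityMeasure P] (hm1 : m1 ≤ m0) (hm2 : m2 ≤ m0) {φ : ℝ}
    (hφ : ∀ A B, MeasurableSet[m1] A → MeasurableSet[m2] B →
      |P.real (A ∩ B) - P.real A * P.real B| ≤ φ * P.real A)
    {X Y : Ω → ℝ} (hX : Measurable[m1] X) (hX2 : MemLp X 2 P)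
    (hY : Measurable[m2] Y) (hY2 : MemLp Y 2 P) {t : ℝ} (ht : 0 < t) :
    |∫ ω, X ω * Y ω ∂P - (∫ ω, X ω ∂P) * ∫ ω, Y ω ∂P| ≤
      t * φ * ∫ ω, X ω ^ 2 ∂P + t⁻¹ * ∫ ω, Y ω ^ 2 ∂P := by
  obtain ⟨s, hsm, hsf, hsb, hst⟩ := @exists_simple_approx Ω m1 X hX
  have hXi : Integrable X P := hX2.integrable (by norm_num)
  have hX2i : Integrable (fun ω => X ω ^ 2) P :=
    (memLp_two_iff_integrable_sq hX2.aestronglyMeasurable).1 hX2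
  have hXY : Integrable (fun ω => X ω * Y ω) P := hX2.integrable_mul hY2
  have hsm0 : ∀ n, AEStronglyMeasurable[m0] (s n) P :=
    fun n => ((hsm n).mono hm1 le_rfl).aestronglyMeasurable
  have l1 : Tendsto (fun n => ∫ ω, s n ω * Y ω ∂P) atTop (𝓝 (∫ ω, X ω * Y ω ∂P)) := by
    refine tendsto_integral_of_dominated_convergence (fun ω => 2 * |X ω * Y ω|)
      (fun n => (hsm0 n).mul hY2.aestronglyMeasurable) (hXY.abs.const_mul 2)
      (fun n => Eventually.of_forall fun ω => ?_)
      (Eventually.of_forall fun ω => (hst ω).mul_const _)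
    rw [Real.norm_eq_abs, abs_mul, abs_mul, ← mul_assoc]
    exact mul_le_mul_of_nonneg_right (hsb n ω) (abs_nonneg _)
  have l2 : Tendsto (fun n => ∫ ω, s n ω ∂P) atTop (𝓝 (∫ ω, X ω ∂P)) :=
    tendsto_integral_of_dominated_convergence (fun ω => 2 * |X ω|) hsm0 (hXi.abs.const_mul 2)
      (fun n => Eventually.of_forall fun ω => hsb n ω) (Eventually.of_forall hst)
  have l3 : Tendsto (fun n => ∫ ω, s n ω ^ 2 ∂P) atTop (𝓝 (∫ ω, X ω ^ 2 ∂P)) := by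
    refine tendsto_integral_of_dominated_convergence (fun ω => 4 * X ω ^ 2)
      (fun n => (hsm0 n).pow 2) (hX2i.const_mul 4)
      (fun n => Eventually.of_forall fun ω => ?_)
      (Eventually.of_forall fun ω => (hst ω).pow 2)
    rw [Real.norm_eq_abs, abs_pow, ← sq_abs (X ω)]
    nlinarith [hsb n ω, abs_nonneg (s n ω), abs_nonneg (X ω)]
  exact le_of_tendsto_of_tendsto' ((l1.sub (l2.mul_const _)).abs)
    ((l3.const_mul _).add_const _)
    (fun n => cov_le_of_finite_range hm1 hm2 hφ (hsm n) (hsf n) hY hY2 ht)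

/-! ### Mixing coefficients of the field -/

lemma sigmaLE_le [m0 : MeasurableSpace Ω] {q : ℕ} {ξ : (Fin q → ℤ) → Ω → ℝ}
    (hmeas : ∀ i, Measurable (ξ i)) (k : Fin q) (r : ℤ) : sigmaLE ξ k r ≤ m0 :=
  iSup₂_le fun i _ => (hmeas i).comap_le

lemma sigmaGE_le [m0 : MeasurableSpace Ω] {q : ℕ} {ξ : (Fin q → ℤ) → Ω → ℝ}
    (hmeas : ∀ i, Measurable (ξ i)) (k : Fin q) (r : ℤ) : sigmaGE ξ k r ≤ m0 :=
  iSup₂_le fun i _ => (hmeas i).comap_le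

lemma measurable_sigmaLE [MeasurableSpace Ω] {q : ℕ} (ξ : (Fin q → ℤ) → Ω → ℝ)
    {k : Fin q} {r : ℤ} {i : Fin q → ℤ} (hi : i k ≤ r) : Measurable[sigmaLE ξ k r] (ξ i) :=
  measurable_iff_comap_le.2 (le_iSup₂
    (f := fun (i : Fin q → ℤ) (_ : i ∈ {i : Fin q → ℤ | i k ≤ r}) =>
      MeasurableSpace.comap (ξ i) inferInstance) i hi)

lemma measurable_sigmaGE [MeasurableSpace Ω] {q : ℕ} (ξ : (Fin q → ℤ) → Ω → ℝ)
    {k : Fin q} {r : ℤ} {i : Fin q → ℤ} (hi : r ≤ i k) : Measurable[sigmaGE ξ k r] (ξ i) :=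
  measurable_iff_comap_le.2 (le_iSup₂
    (f := fun (i : Fin q → ℤ) (_ : i ∈ {i : Fin q → ℤ | r ≤ i k}) =>
      MeasurableSpace.comap (ξ i) inferInstance) i hi)

lemma phiMix_nonneg [MeasurableSpace Ω] {q : ℕ} (ξ : (Fin q → ℤ) → Ω → ℝ) (P : Measure Ω)
    (r : ℤ) : 0 ≤ phiMix ξ P r := by
  unfold phiMix
  split_ifs
  · exact zero_le_one
  · refine Real.iSup_nonneg fun j => Real.sSup_nonneg ?_
    rintro x ⟨A, B, -, -, -, rfl⟩
    exact abs_nonneg _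

/-- The mixing bound cleared of its denominator, valid for null sets `A` as well. -/
lemma abs_sub_le_phiMix_mul [MeasurableSpace Ω] {q : ℕ} (ξ : (Fin q → ℤ) → Ω → ℝ)
    (P : Measure Ω) [IsProbabilityMeasure P] {k : Fin q} {r : ℤ} (hr : 0 < r) {A B : Set Ω}
    (hA : MeasurableSet[sigmaLE ξ k 0] A) (hB : MeasurableSet[sigmaGE ξ k r] B) :
    |P.real (A ∩ B) - P.real A * P.real B| ≤ phiMix ξ P r * P.real A := by
  by_cases hPA : P A = 0
  · have h1 : P.real A = 0 := by simp [Measure.real, hPA]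
    have h2 : P.real (A ∩ B) = 0 := by
      simp [Measure.real, measure_mono_null (Set.inter_subset_left (t := B)) hPA]
    simp [h1, h2]
  have hpos : 0 < P.real A := by
    rw [measureReal_def]
    exact ENNReal.toReal_pos hPA (measure_ne_top _ _)
  have hbdd : BddAbove {x | ∃ A B : Set Ω, MeasurableSet[sigmaLE ξ k 0] A ∧
      MeasurableSet[sigmaGE ξ k r] B ∧
      P A ≠ 0 ∧ x = |(P (A ∩ B)).toReal / (P A).toReal - (P B).toReal|} := by
    refine ⟨1, ?_⟩
    rintro x ⟨A', B', -, -, -, rfl⟩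
    have h1 : (P (A' ∩ B')).toReal / (P A').toReal ≤ 1 :=
      div_le_one_of_le₀ (ENNReal.toReal_mono (measure_ne_top _ _)
        (measure_mono Set.inter_subset_left)) ENNReal.toReal_nonneg
    have h2 : 0 ≤ (P (A' ∩ B')).toReal / (P A').toReal := by positivity
    have h3 : (P B').toReal ≤ 1 := measureReal_le_one
    have h4 : 0 ≤ (P B').toReal := ENNReal.toReal_nonneg
    rw [abs_le]
    constructor <;> linarith
  have hle : |P.real (A ∩ B) / P.real A - P.real B| ≤ phiMix ξ P r := by
    rw [phiMix, if_neg (not_le.2 hr)]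
    exact (le_csSup hbdd ⟨A, B, hA, hB, hPA, rfl⟩).trans
      (le_ciSup (f := fun j => phiCoeff ξ P j r) (Set.finite_range _).bddAbove k)
  have e : P.real (A ∩ B) - P.real A * P.real B =
      (P.real (A ∩ B) / P.real A - P.real B) * P.real A := by
    field_simp
  rw [e, abs_mul, abs_of_pos hpos]
  exact mul_le_mul_of_nonneg_right hle hpos.le

/-- The trivial covariance bound, as the case of mixing coefficient `1`. -/
lemma abs_cov_le_add [MeasurableSpace Ω] {P : Measure Ω} [IsProbabilityMeasure P]
    {X Y : Ω → ℝ} (hX : Measurable X) (hX2 : MemLp X 2 P) (hY : Measurable Y)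
    (hY2 : MemLp Y 2 P) :
    |∫ ω, X ω * Y ω ∂P - (∫ ω, X ω ∂P) * ∫ ω, Y ω ∂P| ≤
      ∫ ω, X ω ^ 2 ∂P + ∫ ω, Y ω ^ 2 ∂P := by
  have := cov_le (P := P) (φ := 1) le_rfl le_rfl (fun A B _ _ => by
    have h1 : P.real (A ∩ B) ≤ P.real A := measureReal_mono Set.inter_subset_left
    have h2 : 0 ≤ P.real (A ∩ B) := measureReal_nonneg
    have h3 : P.real B ≤ 1 := measureReal_le_one
    have h4 : 0 ≤ P.real B := measureReal_nonneg
    have h5 : 0 ≤ P.real A := measureReal_nonneg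
    rw [abs_le]
    constructor <;> nlinarith) hX hX2 hY hY2 one_pos
  simpa using this

/-- Covariance across a gap of width `r`: `cov_le` with `t = φ(r)^{-1/2}`, or `t → ∞` when
`φ(r) = 0`. -/
lemma abs_cov_le_sqrt_phiMix [MeasurableSpace Ω] {q : ℕ} {ξ : (Fin q → ℤ) → Ω → ℝ}
    {P : Measure Ω} [IsProbabilityMeasure P] (hmeas : ∀ i, Measurable (ξ i))
    {k : Fin q} {r : ℤ} (hr : 0 < r) {X Y : Ω → ℝ}
    (hX : Measurable[sigmaLE ξ k 0] X) (hX2 : MemLp X 2 P)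
    (hY : Measurable[sigmaGE ξ k r] Y) (hY2 : MemLp Y 2 P) :
    |∫ ω, X ω * Y ω ∂P - (∫ ω, X ω ∂P) * ∫ ω, Y ω ∂P| ≤
      √(phiMix ξ P r) * (∫ ω, X ω ^ 2 ∂P + ∫ ω, Y ω ^ 2 ∂P) := by
  have key := fun (t : ℝ) (ht : 0 < t) => cov_le (sigmaLE_le hmeas k 0) (sigmaGE_le hmeas k r)
    (fun A B hA hB => abs_sub_le_phiMix_mul ξ P hr hA hB) hX hX2 hY hY2 ht
  rcases (phiMix_nonneg ξ P r).eq_or_lt with h0 | h0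
  · rw [← h0] at key ⊢
    have hlim : Tendsto (fun t : ℝ => t⁻¹ * ∫ ω, Y ω ^ 2 ∂P) atTop (𝓝 0) := by
      simpa using tendsto_inv_atTop_zero.mul_const (∫ ω, Y ω ^ 2 ∂P)
    have := ge_of_tendsto hlim (by
      filter_upwards [eventually_gt_atTop 0] with t ht
      simpa using key t ht)
    simpa using this
  · have hs : 0 < √(phiMix ξ P r) := Real.sqrt_pos.2 h0
    have := key (√(phiMix ξ P r))⁻¹ (inv_pos.2 hs)
    rw [inv_inv] at this
    have e : (√(phiMix ξ P r))⁻¹ * phiMix ξ P r = √(phiMix ξ P r) := by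
      rw [inv_mul_eq_div, Real.div_sqrt]
    rw [e] at this
    linarith

/-! ### Stationarity and moments -/

lemma identDistrib_shift [MeasurableSpace Ω] {q : ℕ} {ξ : (Fin q → ℤ) → Ω → ℝ}
    {P : Measure Ω} (hmeas : ∀ i, Measurable (ξ i)) (hstat : StrictStationary ξ P)
    (t : Fin q → ℤ) {F : ((Fin q → ℤ) → ℝ) → ℝ} (hF : Measurable F) :
    ProbabilityTheory.IdentDistrib (fun ω => F fun i => ξ (i + t) ω)
      (fun ω => F fun i => ξ i ω) P P :=
  ProbabilityTheory.IdentDistrib.comp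
    (f := fun ω i => ξ (i + t) ω) (g := fun ω i => ξ i ω)
    ⟨(measurable_pi_iff.2 fun i => hmeas (i + t)).aemeasurable,
      (measurable_pi_iff.2 fun i => hmeas i).aemeasurable, hstat t⟩ hF

lemma identDistrib_zero [MeasurableSpace Ω] {q : ℕ} {ξ : (Fin q → ℤ) → Ω → ℝ}
    {P : Measure Ω} (hmeas : ∀ i, Measurable (ξ i)) (hstat : StrictStationary ξ P)
    (a : Fin q → ℤ) : ProbabilityTheory.IdentDistrib (ξ a) (ξ 0) P P := by
  simpa using identDistrib_shift hmeas hstat a (F := fun x => x 0) (measurable_pi_apply 0)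

section Moments

variable [MeasurableSpace Ω] {q : ℕ} {ξ : (Fin q → ℤ) → Ω → ℝ}
  {P : Measure Ω}

lemma integrable_pow_four (hmeas : ∀ i, Measurable (ξ i)) (hstat : StrictStationary ξ P)
    (hmom : Integrable (fun ω => (ξ 0 ω) ^ 4) P) (a : Fin q → ℤ) :
    Integrable (fun ω => (ξ a ω) ^ 4) P :=
  (((identDistrib_zero hmeas hstat a).comp (measurable_id.pow_const 4)).integrable_iff).2 hmom

lemma memLp_two_field [IsProbabilityMeasure P] (hmeas : ∀ i, Measurable (ξ i))
    (hstat : StrictStationary ξ P)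
    (hmom : Integrable (fun ω => (ξ 0 ω) ^ 4) P) (a : Fin q → ℤ) : MemLp (ξ a) 2 P := by
  rw [memLp_two_iff_integrable_sq (hmeas a).aestronglyMeasurable]
  refine ((integrable_const (1 : ℝ)).add (integrable_pow_four hmeas hstat hmom a)).mono'
    ((hmeas a).pow_const 2).aestronglyMeasurable (Eventually.of_forall fun ω => ?_)
  rw [Real.norm_eq_abs, abs_of_nonneg (sq_nonneg _)]
  simp only [Pi.add_apply]
  nlinarith [sq_nonneg (ξ a ω ^ 2 - 1)]

lemma integral_sq_field (hmeas : ∀ i, Measurable (ξ i)) (hstat : StrictStationary ξ P)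
    (a : Fin q → ℤ) : ∫ ω, ξ a ω ^ 2 ∂P = ∫ ω, ξ 0 ω ^ 2 ∂P :=
  ((identDistrib_zero hmeas hstat a).comp (measurable_id.pow_const 2)).integral_eq

lemma integrable_prod_sq (hmeas : ∀ i, Measurable (ξ i)) (hstat : StrictStationary ξ P)
    (hmom : Integrable (fun ω => (ξ 0 ω) ^ 4) P) (a b : Fin q → ℤ) :
    Integrable (fun ω => (ξ a ω * ξ b ω) ^ 2) P := by
  refine ((integrable_pow_four hmeas hstat hmom a).add
    (integrable_pow_four hmeas hstat hmom b)).mono'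
    (((hmeas a).mul (hmeas b)).pow_const 2).aestronglyMeasurable
    (Eventually.of_forall fun ω => ?_)
  rw [Real.norm_eq_abs, abs_of_nonneg (sq_nonneg _)]
  simp only [Pi.add_apply]
  nlinarith [sq_nonneg (ξ a ω ^ 2 - ξ b ω ^ 2), sq_nonneg (ξ a ω ^ 2), sq_nonneg (ξ b ω ^ 2)]

lemma memLp_two_prod (hmeas : ∀ i, Measurable (ξ i)) (hstat : StrictStationary ξ P)
    (hmom : Integrable (fun ω => (ξ 0 ω) ^ 4) P) (a b : Fin q → ℤ) :
    MemLp (fun ω => ξ a ω * ξ b ω) 2 P :=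
  (memLp_two_iff_integrable_sq ((hmeas a).mul (hmeas b)).aestronglyMeasurable).2
    (integrable_prod_sq hmeas hstat hmom a b)

lemma integral_prod_sq_le (hmeas : ∀ i, Measurable (ξ i)) (hstat : StrictStationary ξ P)
    (hmom : Integrable (fun ω => (ξ 0 ω) ^ 4) P) (a b : Fin q → ℤ) :
    ∫ ω, (ξ a ω * ξ b ω) ^ 2 ∂P ≤ ∫ ω, ξ 0 ω ^ 4 ∂P := by
  have h4 : ∀ a, ∫ ω, ξ a ω ^ 4 ∂P = ∫ ω, ξ 0 ω ^ 4 ∂P := fun a =>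
    ((identDistrib_zero hmeas hstat a).comp (measurable_id.pow_const 4)).integral_eq
  have hi := integrable_pow_four hmeas hstat hmom
  have : ∫ ω, (ξ a ω * ξ b ω) ^ 2 ∂P ≤ ∫ ω, (1 / 2 * ξ a ω ^ 4 + 1 / 2 * ξ b ω ^ 4) ∂P := by
    refine integral_mono (integrable_prod_sq hmeas hstat hmom a b)
      (((hi a).const_mul _).add ((hi b).const_mul _)) fun ω => ?_
    simp only
    nlinarith [sq_nonneg (ξ a ω ^ 2 - ξ b ω ^ 2)]
  rw [integral_add ((hi a).const_mul _) ((hi b).const_mul _), integral_const_mul,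
    integral_const_mul, h4 a, h4 b] at this
  linarith

/-! ### Covariances of the field and of its lagged products -/

/-- Covariance of two lagged products whose sites are separated by `r` in direction `k`. For
`r ≤ 0` this is the trivial bound, since then `phiMix ξ P r = 1`. -/
lemma abs_cov_prod_le [IsProbabilityMeasure P] (hmeas : ∀ i, Measurable (ξ i))
    (hstat : StrictStationary ξ P)
    (hmom : Integrable (fun ω => (ξ 0 ω) ^ 4) P) {a b c d : Fin q → ℤ} {k : Fin q} {s r : ℤ}
    (ha : a k ≤ s) (hb : b k ≤ s) (hc : s + r ≤ c k) (hd : s + r ≤ d k) :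
    |∫ ω, (ξ a ω * ξ b ω) * (ξ c ω * ξ d ω) ∂P -
      (∫ ω, ξ a ω * ξ b ω ∂P) * ∫ ω, ξ c ω * ξ d ω ∂P| ≤
      √(phiMix ξ P r) * (2 * ∫ ω, ξ 0 ω ^ 4 ∂P) := by
  have h4 := integral_prod_sq_le hmeas hstat hmom
  rcases le_or_gt r 0 with hr | hr
  · have h := abs_cov_le_add ((hmeas a).mul (hmeas b)) (memLp_two_prod hmeas hstat hmom a b)
      ((hmeas c).mul (hmeas d)) (memLp_two_prod hmeas hstat hmom c d)
    rw [phiMix, if_pos hr, Real.sqrt_one, one_mul]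
    refine h.trans ?_
    have h1 := h4 a b
    have h2 := h4 c d
    simp only [Pi.mul_apply] at h1 h2 ⊢
    linarith
  · set t : Fin q → ℤ := fun _ => s with ht
    have e1 : ∀ a b, ∫ ω, ξ a ω * ξ b ω ∂P = ∫ ω, ξ (a - t) ω * ξ (b - t) ω ∂P := by
      intro a b
      have := (identDistrib_shift hmeas hstat t (F := fun x => x (a - t) * x (b - t))
        (by fun_prop)).integral_eq
      simpa using this
    have e2 : ∫ ω, (ξ a ω * ξ b ω) * (ξ c ω * ξ d ω) ∂P =
        ∫ ω, (ξ (a - t) ω * ξ (b - t) ω) * (ξ (c - t) ω * ξ (d - t) ω) ∂P := by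
      have := (identDistrib_shift hmeas hstat t
        (F := fun x => (x (a - t) * x (b - t)) * (x (c - t) * x (d - t)))
        (by fun_prop)).integral_eq
      simpa using this
    rw [e1 a b, e1 c d, e2]
    have h := abs_cov_le_sqrt_phiMix (P := P) hmeas (k := k) hr
      (X := fun ω => ξ (a - t) ω * ξ (b - t) ω) (Y := fun ω => ξ (c - t) ω * ξ (d - t) ω)
      (Measurable.mul (measurable_sigmaLE ξ (by simp [ht, ha]))
        (measurable_sigmaLE ξ (by simp [ht, hb])))
      (memLp_two_prod hmeas hstat hmom _ _)
      (Measurable.mul (measurable_sigmaGE ξ (by simp only [ht, Pi.sub_apply]; linarith))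
        (measurable_sigmaGE ξ (by simp only [ht, Pi.sub_apply]; linarith)))
      (memLp_two_prod hmeas hstat hmom _ _)
    refine h.trans (mul_le_mul_of_nonneg_left ?_ (Real.sqrt_nonneg _))
    have h1 := h4 (a - t) (b - t)
    have h2 := h4 (c - t) (d - t)
    linarith

lemma integral_prod_eq_acov1 (hmeas : ∀ i, Measurable (ξ i)) (hstat : StrictStationary ξ P)
    (i j : Fin q → ℤ) : ∫ ω, ξ i ω * ξ (i + j) ω ∂P = acov1 ξ P j := by
  have := (identDistrib_shift hmeas hstat i (F := fun x => x 0 * x j) (by fun_prop)).integral_eq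
  simpa [acov1, add_comm] using this

/-- The sup norm on `ℤ^q`, as a natural number. -/
def supNorm {q : ℕ} (d : Fin q → ℤ) : ℕ := Finset.univ.sup fun k => (d k).natAbs

lemma natAbs_le_supNorm {q : ℕ} (d : Fin q → ℤ) (k : Fin q) : (d k).natAbs ≤ supNorm d :=
  Finset.le_sup (f := fun k => (d k).natAbs) (Finset.mem_univ k)

lemma exists_supNorm_eq {q : ℕ} [Nonempty (Fin q)] (d : Fin q → ℤ) :
    ∃ k, supNorm d = (d k).natAbs := by
  obtain ⟨k, -, hk⟩ := Finset.exists_mem_eq_sup Finset.univ Finset.univ_nonempty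
    (fun k => (d k).natAbs)
  exact ⟨k, hk⟩

/-- The autocovariance at lag `j` is `O(φ(|j|)^{1/2})`: the sites `0` and `j` are separated by
`|j|` in the direction of a largest coordinate of `j`. -/
lemma abs_acov1_le [Nonempty (Fin q)] [IsProbabilityMeasure P]
    (hmeas : ∀ i, Measurable (ξ i))
    (hstat : StrictStationary ξ P) (hmean : ∫ ω, ξ 0 ω ∂P = 0)
    (hmom : Integrable (fun ω => (ξ 0 ω) ^ 4) P) (j : Fin q → ℤ) :
    |acov1 ξ P j| ≤ √(phiMix ξ P (supNorm j)) * (2 * ∫ ω, ξ 0 ω ^ 2 ∂P) := by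
  have h2 := integral_sq_field hmeas hstat (P := P)
  have key : ∀ j : Fin q → ℤ, (∃ k, (supNorm j : ℤ) = j k) →
      |acov1 ξ P j| ≤ √(phiMix ξ P (supNorm j)) * (2 * ∫ ω, ξ 0 ω ^ 2 ∂P) := by
    rintro j ⟨k, hk⟩
    rcases (Int.natCast_nonneg (supNorm j)).eq_or_lt with h0 | h0
    · have h := abs_cov_le_add (hmeas 0) (memLp_two_field hmeas hstat hmom 0)
        (hmeas j) (memLp_two_field hmeas hstat hmom j)
      rw [← h0, phiMix, if_pos le_rfl, Real.sqrt_one, one_mul]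
      rw [h2 j, hmean, zero_mul, sub_zero] at h
      rw [two_mul]
      exact h
    · have h := abs_cov_le_sqrt_phiMix (P := P) hmeas (k := k) h0
        (measurable_sigmaLE ξ (i := 0) (by simp)) (memLp_two_field hmeas hstat hmom 0)
        (measurable_sigmaGE ξ hk.le) (memLp_two_field hmeas hstat hmom j)
      rw [h2 j, hmean, zero_mul, sub_zero] at h
      rw [two_mul]
      exact h
  obtain ⟨k, hk⟩ := exists_supNorm_eq j
  rcases le_total 0 (j k) with hj | hj
  · exact key j ⟨k, by omega⟩
  -- by stationarity the lag may be replaced by its negative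
  · have hs : supNorm (-j) = supNorm j := by simp [supNorm]
    have e : acov1 ξ P j = acov1 ξ P (-j) := by
      rw [← integral_prod_eq_acov1 hmeas hstat j (-j)]
      simp [acov1, mul_comm]
    rw [e, ← hs]
    exact key (-j) ⟨k, by rw [hs, Pi.neg_apply]; omega⟩

/-- Covariance of `ξ_i ξ_{i+j}` and `ξ_{i'} ξ_{i'+j}` for a lag with `|j| ≤ m`: a largest
coordinate of `i' - i` gives the direction in which the two pairs of sites are separated. -/
lemma abs_cov_lag_le [Nonempty (Fin q)] [IsProbabilityMeasure P]
    (hmeas : ∀ i, Measurable (ξ i))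
    (hstat : StrictStationary ξ P)
    (hmom : Integrable (fun ω => (ξ 0 ω) ^ 4) P) {m : ℕ} {j : Fin q → ℤ}
    (hj : supNorm j ≤ m) (i i' : Fin q → ℤ) :
    |∫ ω, (ξ i ω * ξ (i + j) ω) * (ξ i' ω * ξ (i' + j) ω) ∂P -
      acov1 ξ P j * acov1 ξ P j| ≤
      √(phiMix ξ P ((supNorm (i' - i) : ℤ) - m)) * (2 * ∫ ω, ξ 0 ω ^ 4 ∂P) := by
  obtain ⟨k, hk⟩ := exists_supNorm_eq (i' - i)
  have hjk := natAbs_le_supNorm j k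
  rw [Pi.sub_apply] at hk
  rcases le_total 0 (i' k - i k) with hd | hd
  · have := abs_cov_prod_le hmeas hstat hmom (a := i) (b := i + j) (c := i') (d := i' + j)
      (k := k) (s := i k + max 0 (j k)) (r := (supNorm (i' - i) : ℤ) - m)
      (by omega) (by rw [Pi.add_apply]; omega) (by omega) (by rw [Pi.add_apply]; omega)
    rwa [integral_prod_eq_acov1 hmeas hstat, integral_prod_eq_acov1 hmeas hstat] at this
  · have := abs_cov_prod_le hmeas hstat hmom (a := i') (b := i' + j) (c := i) (d := i + j)
      (k := k) (s := i' k + max 0 (j k)) (r := (supNorm (i' - i) : ℤ) - m)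
      (by omega) (by rw [Pi.add_apply]; omega) (by omega) (by rw [Pi.add_apply]; omega)
    rw [integral_prod_eq_acov1 hmeas hstat, integral_prod_eq_acov1 hmeas hstat] at this
    simpa only [mul_comm] using this

end Moments

/-! ### Counting lattice points -/

lemma mem_lags_const {q m : ℕ} {d : Fin q → ℤ} :
    d ∈ lags q (fun _ => m) ↔ supNorm d ≤ m := by
  simp only [lags, Finset.mem_Icc, Pi.le_def, supNorm, Finset.sup_le_iff, Finset.mem_univ,
    true_imp_iff]
  constructor
  · rintro ⟨h1, h2⟩ k
    have := h1 k
    have := h2 k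
    omega
  · intro h
    refine ⟨fun k => ?_, fun k => ?_⟩ <;> have := h k <;> omega

lemma card_lags_const (q m : ℕ) : (lags q fun _ => m).card = (2 * m + 1) ^ q := by
  rw [lags, Pi.card_Icc]
  simp only [Int.card_Icc, Finset.prod_const, Finset.card_univ, Fintype.card_fin]
  congr 1
  omega

/-- The sphere of radius `r ≥ 1` in `ℤ^q` has at most `2q (2r+1)^{q-1}` points. -/
lemma card_filter_supNorm_le {q : ℕ} (T : Finset (Fin q → ℤ)) {r : ℕ} (hr : 1 ≤ r) :
    ((T.filter fun d => supNorm d = r).card : ℝ) ≤ 2 * q * (2 * r + 1) ^ (q - 1) := by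
  have hsub : T.filter (fun d => supNorm d = r) ⊆
      lags q (fun _ => r) \ lags q (fun _ => r - 1) := by
    intro d hd
    have := (Finset.mem_filter.1 hd).2
    rw [Finset.mem_sdiff, mem_lags_const, mem_lags_const]
    omega
  have hsub2 : lags q (fun _ => r - 1) ⊆ lags q (fun _ => r) := by
    intro d
    rw [mem_lags_const, mem_lags_const]
    omega
  have h1 : ((T.filter fun d => supNorm d = r).card : ℝ) ≤
      (2 * r + 1 : ℝ) ^ q - (2 * r - 1 : ℝ) ^ q := by
    have h := Finset.card_le_card hsub
    have h' := Finset.card_sdiff_add_card_eq_card hsub2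
    rw [card_lags_const, card_lags_const] at h'
    have hc : ((2 * (r - 1) + 1 : ℕ) : ℝ) = 2 * r - 1 := by
      push_cast [Nat.cast_sub hr]; ring
    have h'' : (((lags q (fun _ => r) \ lags q (fun _ => r - 1)).card : ℕ) : ℝ) +
        (2 * r - 1 : ℝ) ^ q = (2 * r + 1 : ℝ) ^ q := by
      rw [← hc]
      exact_mod_cast h'
    have : ((T.filter fun d => supNorm d = r).card : ℝ) ≤
      ((lags q (fun _ => r) \ lags q (fun _ => r - 1)).card : ℝ) := by exact_mod_cast h
    linarith
  have hr' : (1 : ℝ) ≤ r := by exact_mod_cast hr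
  have h2 := abs_pow_sub_pow_le (2 * r + 1 : ℝ) (2 * r - 1 : ℝ) q
  have e1 : max |(2 * r + 1 : ℝ)| |(2 * r - 1 : ℝ)| = 2 * r + 1 := by
    rw [abs_of_nonneg (by linarith), abs_of_nonneg (by linarith)]
    exact max_eq_left (by linarith)
  have e2 : |(2 * r + 1 : ℝ) - (2 * r - 1)| = 2 := by
    rw [show (2 * r + 1 : ℝ) - (2 * r - 1) = 2 by ring]; norm_num
  rw [e1, e2] at h2
  exact h1.trans ((le_abs_self _).trans h2)

/-- Summation over `ℤ^q` of a summable radial profile delayed by `m`: the ball of radius `m`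
contributes its volume, and each later sphere of radius `m + s` has `O((m+1)^{q-1} s^{q-1})`
points. -/
lemma exists_sum_radial_le {q : ℕ} {ψ : ℤ → ℝ} (h0 : ∀ r, 0 ≤ ψ r) (h1 : ∀ r ≤ 0, ψ r = 1)
    (hsum : Summable fun r : ℕ => (r : ℝ) ^ (q - 1) * ψ r) :
    ∃ C : ℝ, 0 ≤ C ∧ ∀ (m : ℕ) (T : Finset (Fin q → ℤ)),
      ∑ d ∈ T, ψ ((supNorm d : ℤ) - m) ≤ C * ((m : ℝ) + 1) ^ q := by
  classical
  set S := ∑' r : ℕ, (r : ℝ) ^ (q - 1) * ψ r with hS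
  have hS0 : 0 ≤ S := tsum_nonneg fun r => mul_nonneg (by positivity) (h0 _)
  refine ⟨2 ^ q + 2 * q * 3 ^ (q - 1) * S, by positivity, fun m T => ?_⟩
  rw [← Finset.sum_filter_add_sum_filter_not T (fun d => supNorm d ≤ m), add_mul]
  refine add_le_add ?_ ?_
  · have e : ∑ d ∈ T.filter (fun d => supNorm d ≤ m), ψ ((supNorm d : ℤ) - m) =
        (T.filter fun d => supNorm d ≤ m).card := by
      rw [Finset.sum_congr rfl (g := fun _ => (1 : ℝ))]
      · simp
      · intro d hd
        have := (Finset.mem_filter.1 hd).2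
        exact h1 _ (by omega)
    rw [e]
    have hsub : T.filter (fun d => supNorm d ≤ m) ⊆ lags q (fun _ => m) := fun d hd =>
      mem_lags_const.2 (Finset.mem_filter.1 hd).2
    have hc := Finset.card_le_card hsub
    rw [card_lags_const] at hc
    calc ((T.filter fun d => supNorm d ≤ m).card : ℝ) ≤ ((2 * m + 1 : ℕ) : ℝ) ^ q := by
          exact_mod_cast hc
      _ ≤ (2 * ((m : ℝ) + 1)) ^ q := by
          gcongr
          push_cast
          linarith
      _ = _ := by rw [mul_pow]
  · set T' := T.filter (fun d => ¬ supNorm d ≤ m) with hT'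
    set R := T'.sup supNorm + 1 with hR
    rw [← Finset.sum_fiberwise_of_maps_to (s := T') (t := Finset.range R)
      (g := fun d => supNorm d - m - 1)]
    swap
    · intro d hd
      have := Finset.le_sup (f := supNorm) hd
      rw [Finset.mem_range]
      omega
    have hterm : ∀ s ∈ Finset.range R,
        ∑ d ∈ T' with supNorm d - m - 1 = s, ψ ((supNorm d : ℤ) - m) ≤
        (2 * q * 3 ^ (q - 1) * ((m : ℝ) + 1) ^ (q - 1)) *
          (((s + 1 : ℕ) : ℝ) ^ (q - 1) * ψ ((s + 1 : ℕ) : ℤ)) := by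
      intro s _
      have hmem : ∀ d ∈ T'.filter (fun d => supNorm d - m - 1 = s),
          supNorm d = s + 1 + m := by
        intro d hd
        obtain ⟨hd1, hd2⟩ := Finset.mem_filter.1 hd
        have := (Finset.mem_filter.1 hd1).2
        omega
      have e : ∑ d ∈ T' with supNorm d - m - 1 = s, ψ ((supNorm d : ℤ) - m) =
          (T'.filter fun d => supNorm d - m - 1 = s).card * ψ ((s + 1 : ℕ) : ℤ) := by
        rw [Finset.sum_congr rfl (g := fun _ => ψ ((s + 1 : ℕ) : ℤ))]
        · simp
        · intro d hd
          rw [hmem d hd]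
          congr 1
          push_cast
          ring
      have hcard : ((T'.filter fun d => supNorm d - m - 1 = s).card : ℝ) ≤
          2 * q * (2 * ((s + 1 + m : ℕ) : ℝ) + 1) ^ (q - 1) := by
        refine le_trans ?_ (card_filter_supNorm_le T (r := s + 1 + m) (by omega))
        refine Nat.cast_le.2 (Finset.card_le_card fun d hd => ?_)
        exact Finset.mem_filter.2 ⟨(Finset.mem_filter.1 (Finset.mem_filter.1 hd).1).1, hmem d hd⟩
      rw [e]
      calc _ ≤ 2 * q * (2 * ((s + 1 + m : ℕ) : ℝ) + 1) ^ (q - 1) * ψ ((s + 1 : ℕ) : ℤ) :=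
            mul_le_mul_of_nonneg_right hcard (h0 _)
        _ ≤ 2 * q * (3 * ((m : ℝ) + 1) * ((s + 1 : ℕ) : ℝ)) ^ (q - 1) *
              ψ ((s + 1 : ℕ) : ℤ) := by
            have := h0 ((s + 1 : ℕ) : ℤ)
            gcongr
            push_cast
            have hs : (0 : ℝ) ≤ s := Nat.cast_nonneg s
            have hm : (0 : ℝ) ≤ m := Nat.cast_nonneg m
            nlinarith [mul_nonneg hs hm]
        _ = _ := by rw [mul_pow, mul_pow]; ring
    refine (Finset.sum_le_sum hterm).trans ?_
    rw [← Finset.mul_sum]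
    have hsum' : ∑ s ∈ Finset.range R, ((s + 1 : ℕ) : ℝ) ^ (q - 1) * ψ ((s + 1 : ℕ) : ℤ) ≤ S := by
      have h := hsum.sum_le_tsum (Finset.range (R + 1))
        (fun r _ => mul_nonneg (by positivity) (h0 _))
      rw [Finset.sum_range_succ'] at h
      have : 0 ≤ ((0 : ℕ) : ℝ) ^ (q - 1) * ψ ((0 : ℕ) : ℤ) :=
        mul_nonneg (by positivity) (h0 _)
      linarith
    calc _ ≤ 2 * q * 3 ^ (q - 1) * ((m : ℝ) + 1) ^ (q - 1) * S := by gcongr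
      _ ≤ 2 * q * 3 ^ (q - 1) * ((m : ℝ) + 1) ^ q * S := by
          gcongr
          · linarith [(Nat.cast_nonneg m : (0 : ℝ) ≤ m)]
          · omega
      _ = _ := by ring

/-- `Γ̃_n(j)` contains a box with side lengths `n_i - |j_i|`. -/
lemma pow_le_card_boxJ {q : ℕ} {n : Fin q → ℕ} {j : Fin q → ℤ} {M : ℕ}
    (h : ∀ i, M + (j i).natAbs ≤ n i) : M ^ q ≤ (boxJ q n j).card := by
  have hsub : Finset.Icc (fun i => 1 + max 0 (-(j i))) (fun i => (n i : ℤ) - max 0 (j i)) ⊆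
      boxJ q n j := by
    intro x hx
    simp only [boxJ, _root_.box, Finset.mem_filter, Finset.mem_Icc, Pi.le_def, Pi.one_apply,
      Pi.add_apply] at hx ⊢
    obtain ⟨h1, h2⟩ := hx
    refine ⟨⟨fun i => ?_, fun i => ?_⟩, fun i => ?_, fun i => ?_⟩ <;>
      (have := h1 i; have := h2 i; omega)
  refine le_trans ?_ (Finset.card_le_card hsub)
  have e : M ^ q = ∏ _i : Fin q, M := by simp
  rw [Pi.card_Icc, e]
  refine Finset.prod_le_prod' fun i _ => ?_
  rw [Int.card_Icc]
  have := h i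
  omega

/-! ### Summability of the autocovariances and error of the sample autocovariances -/

section Consistency

variable [MeasurableSpace Ω] {q : ℕ} {ξ : (Fin q → ℤ) → Ω → ℝ} {P : Measure Ω}

/-- The root mixing coefficients satisfy the hypotheses of `exists_sum_radial_le`. -/
lemma exists_sum_sqrt_phiMix_le
    (hphisum : Summable (fun r : ℕ => (r : ℝ) ^ (q - 1) * Real.sqrt (phiMix ξ P (r : ℤ)))) :
    ∃ C : ℝ, 0 ≤ C ∧ ∀ (m : ℕ) (T : Finset (Fin q → ℤ)),
      ∑ d ∈ T, √(phiMix ξ P ((supNorm d : ℤ) - m)) ≤ C * ((m : ℝ) + 1) ^ q :=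
  exists_sum_radial_le (ψ := fun r => √(phiMix ξ P r)) (fun _ => Real.sqrt_nonneg _)
    (fun r hr => by simp [phiMix, hr]) hphisum

/-- Absolute summability of the autocovariances; `∑' j, acov1 ξ P j` is not a junk value. -/
lemma summable_abs_acov1 [Nonempty (Fin q)] [IsProbabilityMeasure P]
    (hmeas : ∀ i, Measurable (ξ i)) (hstat : StrictStationary ξ P)
    (hmean : ∫ ω, ξ 0 ω ∂P = 0) (hmom : Integrable (fun ω => (ξ 0 ω) ^ 4) P)
    (hphisum : Summable (fun r : ℕ => (r : ℝ) ^ (q - 1) * Real.sqrt (phiMix ξ P (r : ℤ)))) :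
    Summable fun j => |acov1 ξ P j| := by
  obtain ⟨C, hC, hT⟩ := exists_sum_sqrt_phiMix_le hphisum
  have hs : Summable fun j : Fin q → ℤ => √(phiMix ξ P (supNorm j)) :=
    summable_of_sum_le (c := C) (fun _ => Real.sqrt_nonneg _) fun T => by simpa using hT 0 T
  exact (hs.mul_right (2 * ∫ ω, ξ 0 ω ^ 2 ∂P)).of_nonneg_of_le (fun _ => abs_nonneg _)
    (abs_acov1_le hmeas hstat hmean hmom)

lemma measurable_acovHat1 (hmeas : ∀ i, Measurable (ξ i)) (n : Fin q → ℕ) (j : Fin q → ℤ) :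
    Measurable (acovHat1 ξ n j) :=
  (Finset.measurable_sum _ fun i _ => (hmeas i).mul (hmeas (i + j))).const_mul _

lemma memLp_two_acovHat1_sub [IsProbabilityMeasure P]
    (hmeas : ∀ i, Measurable (ξ i)) (hstat : StrictStationary ξ P)
    (hmom : Integrable (fun ω => (ξ 0 ω) ^ 4) P) (n : Fin q → ℕ) (j : Fin q → ℤ) :
    MemLp (fun ω => acovHat1 ξ n j ω - acov1 ξ P j) 2 P :=
  MemLp.sub ((memLp_finsetSum _ fun i _ => memLp_two_prod hmeas hstat hmom i (i + j)).const_mul _)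
    (memLp_const _)

/-- Mean square error of the sample autocovariance, uniformly over lags `|j| ≤ m`. It is the
average over pairs `(i, i')` of the covariance of `ξ_i ξ_{i+j}` and `ξ_{i'} ξ_{i'+j}`; for fixed
`i` the sum over `i'` is `O((m+1)^q)` by `exists_sum_sqrt_phiMix_le`. -/
lemma exists_integral_acovHat1_sub_sq_le [Nonempty (Fin q)] [IsProbabilityMeasure P]
    (hmeas : ∀ i, Measurable (ξ i)) (hstat : StrictStationary ξ P)
    (hmom : Integrable (fun ω => (ξ 0 ω) ^ 4) P)
    (hphisum : Summable (fun r : ℕ => (r : ℝ) ^ (q - 1) * Real.sqrt (phiMix ξ P (r : ℤ)))) :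
    ∃ K : ℝ, 0 ≤ K ∧ ∀ (n : Fin q → ℕ) (m : ℕ) (j : Fin q → ℤ), supNorm j ≤ m →
      0 < (boxJ q n j).card →
      ∫ ω, (acovHat1 ξ n j ω - acov1 ξ P j) ^ 2 ∂P ≤
        K * ((m : ℝ) + 1) ^ q / (boxJ q n j).card := by
  classical
  obtain ⟨C, hC, hT⟩ := exists_sum_sqrt_phiMix_le hphisum
  set M4 := ∫ ω, ξ 0 ω ^ 4 ∂P with hM4
  have hM0 : 0 ≤ M4 := integral_nonneg fun ω => by positivity
  refine ⟨C * (2 * M4), by positivity, fun n m j hj hcard => ?_⟩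
  set G := boxJ q n j with hG
  set γ := acov1 ξ P j with hγ
  have hN : (0 : ℝ) < (G.card : ℝ) := by exact_mod_cast hcard
  have hY : ∀ i, MemLp (fun ω => ξ i ω * ξ (i + j) ω) 2 P := fun i =>
    memLp_two_prod hmeas hstat hmom i (i + j)
  have hYi : ∀ i, Integrable (fun ω => ξ i ω * ξ (i + j) ω) P := fun i =>
    (hY i).integrable (by norm_num)
  set Z : (Fin q → ℤ) → Ω → ℝ := fun i ω => ξ i ω * ξ (i + j) ω - γ with hZdef
  have hZ : ∀ i, MemLp (Z i) 2 P := fun i => (hY i).sub (memLp_const γ)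
  have hZZ : ∀ i i', Integrable (fun ω => Z i ω * Z i' ω) P := fun i i' =>
    (hZ i).integrable_mul (hZ i')
  have hpt : ∀ ω, (acovHat1 ξ n j ω - γ) ^ 2 =
      ((G.card : ℝ)⁻¹) ^ 2 * ∑ i ∈ G, ∑ i' ∈ G, Z i ω * Z i' ω := by
    intro ω
    have : acovHat1 ξ n j ω - γ = (G.card : ℝ)⁻¹ * ∑ i ∈ G, Z i ω := by
      simp only [hZdef, Finset.sum_sub_distrib, Finset.sum_const, nsmul_eq_mul, mul_sub]
      rw [inv_mul_cancel_left₀ hN.ne']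
      rfl
    rw [this, mul_pow, sq (∑ i ∈ G, Z i ω), Finset.sum_mul_sum]
  have hcov : ∀ i i', ∫ ω, Z i ω * Z i' ω ∂P ≤
      √(phiMix ξ P ((supNorm (i' - i) : ℤ) - m)) * (2 * M4) := by
    intro i i'
    have e : ∫ ω, Z i ω * Z i' ω ∂P =
        ∫ ω, (ξ i ω * ξ (i + j) ω) * (ξ i' ω * ξ (i' + j) ω) ∂P - γ * γ := by
      have hexp : ∀ ω, Z i ω * Z i' ω =
          (ξ i ω * ξ (i + j) ω) * (ξ i' ω * ξ (i' + j) ω) - γ * (ξ i ω * ξ (i + j) ω)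
            - γ * (ξ i' ω * ξ (i' + j) ω) + γ * γ := fun ω => by simp only [hZdef]; ring
      have hYY : Integrable
          (fun ω => (ξ i ω * ξ (i + j) ω) * (ξ i' ω * ξ (i' + j) ω)) P :=
        (hY i).integrable_mul (hY i')
      have i1 : Integrable (fun ω => (ξ i ω * ξ (i + j) ω) * (ξ i' ω * ξ (i' + j) ω) -
          γ * (ξ i ω * ξ (i + j) ω)) P := hYY.sub ((hYi i).const_mul γ)
      have i2 : Integrable (fun ω => (ξ i ω * ξ (i + j) ω) * (ξ i' ω * ξ (i' + j) ω) -
          γ * (ξ i ω * ξ (i + j) ω) - γ * (ξ i' ω * ξ (i' + j) ω)) P :=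
        i1.sub ((hYi i').const_mul γ)
      simp_rw [hexp]
      rw [integral_add i2 (integrable_const _), integral_sub i1 ((hYi i').const_mul γ),
        integral_sub hYY ((hYi i).const_mul γ), integral_const_mul,
        integral_const_mul, integral_prod_eq_acov1 hmeas hstat,
        integral_prod_eq_acov1 hmeas hstat]
      simp [hγ]
    rw [e]
    exact le_of_abs_le (abs_cov_lag_le hmeas hstat hmom hj i i')
  have hrow : ∀ i ∈ G, ∑ i' ∈ G, ∫ ω, Z i ω * Z i' ω ∂P ≤
      C * ((m : ℝ) + 1) ^ q * (2 * M4) := by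
    intro i _
    refine (Finset.sum_le_sum fun i' _ => hcov i i').trans ?_
    rw [← Finset.sum_mul]
    refine mul_le_mul_of_nonneg_right ?_ (by positivity)
    have := hT m (G.image fun i' => i' - i)
    rwa [Finset.sum_image (fun x _ y _ h => sub_left_injective h)] at this
  simp_rw [hpt]
  rw [integral_const_mul, integral_finsetSum _
    (fun i _ => integrable_finsetSum _ fun i' _ => hZZ i i')]
  have hall : ∑ i ∈ G, ∫ ω, ∑ i' ∈ G, Z i ω * Z i' ω ∂P ≤
      G.card * (C * ((m : ℝ) + 1) ^ q * (2 * M4)) := by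
    rw [← nsmul_eq_mul]
    refine Finset.sum_le_card_nsmul _ _ _ fun i hi => ?_
    rw [integral_finsetSum _ (fun i' _ => hZZ i i')]
    exact hrow i hi
  calc _ ≤ ((G.card : ℝ)⁻¹) ^ 2 * (G.card * (C * ((m : ℝ) + 1) ^ q * (2 * M4))) := by gcongr
    _ = _ := by field_simp

lemma integral_abs_le_sqrt [IsProbabilityMeasure P] {f : Ω → ℝ} (hf : MemLp f 2 P) :
    ∫ ω, |f ω| ∂P ≤ √(∫ ω, f ω ^ 2 ∂P) := by
  refine Real.le_sqrt_of_sq_le ?_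
  have hf' : MemLp (fun ω => |f ω|) 2 P := hf.abs
  have h := ProbabilityTheory.variance_nonneg (fun ω => |f ω|) P
  rw [ProbabilityTheory.variance_eq_sub hf'] at h
  simp only [Pi.pow_apply, sq_abs] at h
  linarith

/-- The total `L¹` error of the sample autocovariances over the lag window is
`O((m³ / n)^{q/2})`: there are `O(m^q)` lags, each with error `O((m / n)^{q/2})`. -/
lemma exists_sum_integral_abs_le [Nonempty (Fin q)] [IsProbabilityMeasure P]
    (hmeas : ∀ i, Measurable (ξ i)) (hstat : StrictStationary ξ P)
    (hmom : Integrable (fun ω => (ξ 0 ω) ^ 4) P)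
    (hphisum : Summable (fun r : ℕ => (r : ℝ) ^ (q - 1) * Real.sqrt (phiMix ξ P (r : ℤ)))) :
    ∃ K : ℝ, ∀ (n l : Fin q → ℕ) (m N : ℕ), (∀ i, l i ≤ m) → (∀ i, N ≤ n i) → 1 ≤ m →
      2 * m ≤ N →
      ∑ j ∈ lags q l, ∫ ω, |acovHat1 ξ n j ω - acov1 ξ P j| ∂P ≤
        K * √(((m : ℝ) ^ 3 / N) ^ q) := by
  obtain ⟨K, hK, hvar⟩ := exists_integral_acovHat1_sub_sq_le hmeas hstat hmom hphisum
  refine ⟨3 ^ q * √(K * 4 ^ q), fun n l m N hl hn hm hmN => ?_⟩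
  have hsub : lags q l ⊆ lags q (fun _ => m) := by
    intro j hj
    simp only [lags, Finset.mem_Icc, Pi.le_def] at hj ⊢
    refine ⟨fun i => ?_, fun i => ?_⟩ <;>
      (have := hj.1 i; have := hj.2 i; have := hl i; omega)
  have hm' : (1 : ℝ) ≤ m := by exact_mod_cast hm
  have hN' : (0 : ℝ) < N := by exact_mod_cast (by omega : 0 < N)
  have hterm : ∀ j ∈ lags q l, ∫ ω, |acovHat1 ξ n j ω - acov1 ξ P j| ∂P ≤
      √(K * 4 ^ q * ((m : ℝ) / N) ^ q) := by
    intro j hj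
    have hjm : supNorm j ≤ m := mem_lags_const.1 (hsub hj)
    have hcard : (N - m) ^ q ≤ (boxJ q n j).card := pow_le_card_boxJ fun i => by
      have := natAbs_le_supNorm j i
      have := hn i
      omega
    have hpos : 0 < (boxJ q n j).card := lt_of_lt_of_le (pow_pos (by omega) q) hcard
    have hcard' : ((N : ℝ) / 2) ^ q ≤ (boxJ q n j).card := by
      refine le_trans ?_ (Nat.cast_le.2 hcard)
      rw [Nat.cast_pow]
      gcongr
      rw [Nat.cast_sub (by omega)]
      have : (2 * m : ℝ) ≤ N := by exact_mod_cast hmN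
      linarith
    refine (integral_abs_le_sqrt (memLp_two_acovHat1_sub hmeas hstat hmom n j)).trans
      (Real.sqrt_le_sqrt ((hvar n m j hjm hpos).trans ?_))
    calc K * ((m : ℝ) + 1) ^ q / (boxJ q n j).card
        ≤ K * (2 * (m : ℝ)) ^ q / ((N : ℝ) / 2) ^ q := by
          gcongr
          linarith
      _ = K * 4 ^ q * ((m : ℝ) / N) ^ q := by
          rw [mul_div_assoc, ← div_pow, mul_assoc, ← mul_pow]
          congr 2
          field_simp
          norm_num
  have hc : ((lags q l).card : ℝ) ≤ (3 * (m : ℝ)) ^ q := by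
    have h := Finset.card_le_card hsub
    rw [card_lags_const] at h
    calc ((lags q l).card : ℝ) ≤ ((2 * m + 1 : ℕ) : ℝ) ^ q := by exact_mod_cast h
      _ ≤ _ := by
        gcongr
        push_cast
        linarith
  calc _ ≤ (lags q l).card • √(K * 4 ^ q * ((m : ℝ) / N) ^ q) :=
        Finset.sum_le_card_nsmul _ _ _ hterm
    _ ≤ (3 * (m : ℝ)) ^ q * √(K * 4 ^ q * ((m : ℝ) / N) ^ q) := by
        rw [nsmul_eq_mul]
        gcongr
    _ = 3 ^ q * √(K * 4 ^ q) * √(((m : ℝ) ^ 3 / N) ^ q) := by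
        have e : ((m : ℝ) ^ 3 / N) ^ q = ((m : ℝ) ^ q) ^ 2 * ((m : ℝ) / N) ^ q := by
          rw [← pow_mul, mul_comm q 2, pow_mul, ← mul_pow]
          congr 1
          ring
        rw [e, Real.sqrt_mul (by positivity : 0 ≤ K * 4 ^ q),
          Real.sqrt_mul (by positivity : 0 ≤ ((m : ℝ) ^ q) ^ 2),
          Real.sqrt_sq (by positivity), mul_pow]
        ring

end Consistency

/-! ### Consistency of the thresholding estimator -/

/-- Theorem: weak consistency of the thresholding estimator, univariate. -/
theorem sigmaHat_threshold_consistent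
    {q : ℕ} [Nonempty (Fin q)]
    [MeasurableSpace Ω] (P : Measure Ω) [IsProbabilityMeasure P]
    (ξ : (Fin q → ℤ) → Ω → ℝ)
    (hmeas : ∀ i, Measurable (ξ i))
    (hstat : StrictStationary ξ P)
    (hmix : Tendsto (fun r : ℕ => phiMix ξ P (r : ℤ)) atTop (𝓝 0))
    (hmean : ∫ ω, ξ 0 ω ∂P = 0)
    (hmom : Integrable (fun ω => (ξ 0 ω) ^ 4) P)
    (hphisum : Summable (fun r : ℕ => (r : ℝ) ^ (q - 1) * Real.sqrt (phiMix ξ P (r : ℤ))))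
    (w : (Fin q → ℕ) → (Fin q → ℤ) → ℝ)
    (hW1 : ∀ j : Fin q → ℤ, Tendsto (fun m : Fin q → ℕ => w m j) atTop (𝓝 1))
    (hW2 : ∃ C : ℝ, ∀ m j, |w m j| ≤ C)
    (mseq : (Fin q → ℕ) → (Fin q → ℕ))
    (hm1 : Tendsto mseq atTop atTop)
    (hm2 : Tendsto (fun n : Fin q → ℕ =>
      ((⨆ i, mseq n i : ℕ) : ℝ) ^ 3 / ((⨅ i, n i : ℕ) : ℝ)) atTop (𝓝 0))
    -- Assumption 2
    (g : ℝ → ℝ → ℝ)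
    (hgmeas : Measurable (Function.uncurry g))
    (hgrange : ∀ x c : ℝ, 0 ≤ c → g x c ∈ Set.Icc (0 : ℝ) 1)
    (c : (Fin q → ℕ) → (Fin q → ℤ) → ℝ)
    (hc : ∀ n j, 0 ≤ c n j)
    (hg : ∀ j : Fin q → ℤ,
      Tendsto (fun n : Fin q → ℕ => ∫ ω, g (acovHat1 ξ n j ω) (c n j) ∂P) atTop (𝓝 1)) :
    ∀ ε : ℝ, 0 < ε →
      Tendsto (fun n : Fin q → ℕ =>
        P {ω | ε < |(∑ j ∈ lags q (mseq n),
          w (mseq n) j * acovHat1 ξ n j ω * g (acovHat1 ξ n j ω) (c n j)) -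
            (∑' j : Fin q → ℤ, acov1 ξ P j)|})
        atTop (𝓝 0) := by
  obtain ⟨C, hC⟩ := hW2
  have hC0 : 0 ≤ C := (abs_nonneg _).trans (hC 0 0)
  have hγs := summable_abs_acov1 hmeas hstat hmean hmom hphisum
  obtain ⟨K, hK⟩ := exists_sum_integral_abs_le hmeas hstat hmom hphisum
  set m : (Fin q → ℕ) → ℕ := fun n => ⨆ i, mseq n i with hmdef
  set N : (Fin q → ℕ) → ℕ := fun n => ⨅ i, n i with hNdef
  have hle_m : ∀ n i, mseq n i ≤ m n := fun n i =>
    le_ciSup (f := fun i => mseq n i) (Set.finite_range _).bddAbove i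
  have hN_le : ∀ n i, N n ≤ n i := fun n i => ciInf_le (OrderBot.bddBelow _) i
  have hgm : ∀ n j, Measurable fun ω => g (acovHat1 ξ n j ω) (c n j) := fun n j =>
    hgmeas.comp ((measurable_acovHat1 hmeas n j).prodMk measurable_const)
  have hgi : ∀ n j, Integrable (fun ω => g (acovHat1 ξ n j ω) (c n j)) P := by
    intro n j
    refine (integrable_const (1 : ℝ)).mono' (hgm n j).aestronglyMeasurable
      (Eventually.of_forall fun ω => ?_)
    have := hgrange (acovHat1 ξ n j ω) _ (hc n j)
    rw [Real.norm_eq_abs, abs_of_nonneg this.1]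
    exact this.2
  set G : (Fin q → ℕ) → (Fin q → ℤ) → ℝ :=
    fun n j => ∫ ω, g (acovHat1 ξ n j ω) (c n j) ∂P with hGdef
  have hG0 : ∀ n j, 0 ≤ G n j := fun n j =>
    integral_nonneg fun ω => (hgrange _ _ (hc n j)).1
  have hG1 : ∀ n j, G n j ≤ 1 := fun n j => by
    have := integral_mono (hgi n j) (integrable_const (1 : ℝ))
      fun ω => (hgrange _ _ (hc n j)).2
    simpa using this
  -- first error term: fluctuation of the sample autocovariances
  have hA : Tendsto (fun n => K * √(((m n : ℝ) ^ 3 / N n) ^ q)) atTop (𝓝 0) := by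
    have hq : q ≠ 0 := by
      rintro rfl
      exact (Classical.arbitrary (Fin 0)).elim0
    have := ((Real.continuous_sqrt.tendsto _).comp (hm2.pow q)).const_mul K
    simpa [hq] using this
  have hev : ∀ᶠ n in atTop, 1 ≤ m n ∧ 2 * m n ≤ N n := by
    have h1 : ∀ᶠ n : Fin q → ℕ in atTop, 1 ≤ n := eventually_ge_atTop 1
    have h2 := hm1.eventually (eventually_ge_atTop 1)
    have h3 := hm2.eventually (gt_mem_nhds (by norm_num : (0 : ℝ) < 1 / 2))
    filter_upwards [h1, h2, h3] with n h1 h2 h3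
    have hm' : 1 ≤ m n := (h2 (Classical.arbitrary _)).trans (hle_m n _)
    have hN' : 1 ≤ N n := le_ciInf fun i => h1 i
    refine ⟨hm', ?_⟩
    have hNpos : (0 : ℝ) < N n := by exact_mod_cast hN'
    rw [div_lt_iff₀ hNpos] at h3
    have h4 : ((m n : ℕ) : ℝ) ≤ (m n : ℝ) ^ 3 :=
      le_self_pow₀ (by exact_mod_cast hm') (by norm_num)
    have : (2 * m n : ℝ) ≤ N n := by linarith
    exact_mod_cast this
  -- second error term: lags removed by the threshold
  have hB : Tendsto (fun n => ∑' j, |acov1 ξ P j| * (1 - G n j)) atTop (𝓝 0) := by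
    have := tendsto_tsum_of_dominated_convergence (𝓕 := atTop)
      (f := fun n j => |acov1 ξ P j| * (1 - G n j)) (g := fun _ => (0 : ℝ)) hγs
      (fun j => by simpa using ((hg j).const_sub 1).const_mul |acov1 ξ P j|)
      (Eventually.of_forall fun n j => by
        have h0 := hG0 n j
        have h1 := hG1 n j
        rw [Real.norm_eq_abs, abs_of_nonneg (mul_nonneg (abs_nonneg _) (by linarith))]
        exact mul_le_of_le_one_right (abs_nonneg _) (by linarith))
    simpa using this
  have hBs : ∀ n, Summable fun j => |acov1 ξ P j| * (1 - G n j) := fun n =>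
    hγs.of_nonneg_of_le
      (fun j => mul_nonneg (abs_nonneg _) (by linarith [hG1 n j]))
      (fun j => mul_le_of_le_one_right (abs_nonneg _) (by linarith [hG0 n j]))
  -- third error term: the deterministic bias of the weighted autocovariance sum
  have hD : Tendsto (fun n => |(∑ j ∈ lags q (mseq n), w (mseq n) j * acov1 ξ P j) -
      ∑' j, acov1 ξ P j|) atTop (𝓝 0) := by
    have h := tendsto_tsum_of_dominated_convergence (𝓕 := atTop)
      (f := fun (n : Fin q → ℕ) j =>
        if j ∈ lags q (mseq n) then w (mseq n) j * acov1 ξ P j else 0)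
      (g := fun j => acov1 ξ P j) (hγs.mul_left C)
      (fun j => by
        have hw : Tendsto (fun n => w (mseq n) j * acov1 ξ P j) atTop (𝓝 (acov1 ξ P j)) := by
          simpa using ((hW1 j).comp hm1).mul_const (acov1 ξ P j)
        refine hw.congr' ?_
        filter_upwards [hm1.eventually (eventually_ge_atTop fun i => (j i).natAbs)] with n hn
        rw [if_pos]
        simp only [lags, Finset.mem_Icc, Pi.le_def]
        refine ⟨fun i => ?_, fun i => ?_⟩ <;> (have := hn i; simp only at this; omega))
      (Eventually.of_forall fun n j => by
        split_ifs
        · rw [norm_mul]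
          exact mul_le_mul_of_nonneg_right (hC _ _) (abs_nonneg _)
        · simpa using mul_nonneg hC0 (abs_nonneg _))
    have h' := (h.sub_const (∑' j, acov1 ξ P j)).abs
    rw [sub_self, abs_zero] at h'
    refine h'.congr fun n => ?_
    rw [tsum_eq_sum (s := lags q (mseq n)) (fun j hj => if_neg hj)]
    congr 2
    exact Finset.sum_congr rfl fun j hj => if_pos hj
  intro ε hε
  set bd : (Fin q → ℕ) → ℝ := fun n =>
    C * (K * √(((m n : ℝ) ^ 3 / N n) ^ q)) + C * ∑' j, |acov1 ξ P j| * (1 - G n j) +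
      |(∑ j ∈ lags q (mseq n), w (mseq n) j * acov1 ξ P j) - ∑' j, acov1 ξ P j| with hbd
  have hbd0 : Tendsto (fun n => ENNReal.ofReal (bd n / ε)) atTop (𝓝 0) := by
    have h := (((hA.const_mul C).add (hB.const_mul C)).add hD).div_const ε
    simpa using ENNReal.tendsto_ofReal h
  refine tendsto_of_tendsto_of_tendsto_of_le_of_le' tendsto_const_nhds hbd0
    (Eventually.of_forall fun _ => zero_le) ?_
  filter_upwards [hev] with n hn
  set b : ℝ := |(∑ j ∈ lags q (mseq n), w (mseq n) j * acov1 ξ P j) - ∑' j, acov1 ξ P j|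
    with hb
  have hi1 : ∀ j, Integrable (fun ω => |acovHat1 ξ n j ω - acov1 ξ P j|) P := fun j =>
    ((memLp_two_acovHat1_sub hmeas hstat hmom n j).integrable (by norm_num)).abs
  have hi2 : ∀ j, Integrable
      (fun ω => |acov1 ξ P j| * (1 - g (acovHat1 ξ n j ω) (c n j))) P := fun j =>
    ((integrable_const (1 : ℝ)).sub (hgi n j)).const_mul _
  set Z1 : Ω → ℝ := fun ω => ∑ j ∈ lags q (mseq n), |acovHat1 ξ n j ω - acov1 ξ P j| with hZ1
  set Z2 : Ω → ℝ := fun ω => ∑ j ∈ lags q (mseq n),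
    |acov1 ξ P j| * (1 - g (acovHat1 ξ n j ω) (c n j)) with hZ2
  have hZ1i : Integrable Z1 P := integrable_finsetSum _ fun j _ => hi1 j
  have hZ2i : Integrable Z2 P := integrable_finsetSum _ fun j _ => hi2 j
  have hZ1n : ∀ ω, 0 ≤ Z1 ω := fun ω => Finset.sum_nonneg fun j _ => abs_nonneg _
  have hZ2n : ∀ ω, 0 ≤ Z2 ω := fun ω => Finset.sum_nonneg fun j _ =>
    mul_nonneg (abs_nonneg _) (by linarith [(hgrange (acovHat1 ξ n j ω) _ (hc n j)).2])
  have hZi : Integrable (fun ω => C * Z1 ω + C * Z2 ω + b) P :=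
    ((hZ1i.const_mul C).add (hZ2i.const_mul C)).add (integrable_const b)
  have hEZ : ∫ ω, (C * Z1 ω + C * Z2 ω + b) ∂P ≤ bd n := by
    have hsumi : Integrable (fun ω => C * Z1 ω + C * Z2 ω) P :=
      (hZ1i.const_mul C).add (hZ2i.const_mul C)
    rw [integral_add hsumi (integrable_const b),
      integral_add (hZ1i.const_mul C) (hZ2i.const_mul C), integral_const_mul,
      integral_const_mul, integral_const, hZ1, hZ2, integral_finsetSum _ fun j _ => hi1 j,
      integral_finsetSum _ fun j _ => hi2 j]
    have e2 : ∀ j, ∫ ω, |acov1 ξ P j| * (1 - g (acovHat1 ξ n j ω) (c n j)) ∂P =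
        |acov1 ξ P j| * (1 - G n j) := by
      intro j
      rw [integral_const_mul, integral_sub (integrable_const _) (hgi n j)]
      simp [hGdef]
    simp_rw [e2]
    have h1 := hK n (mseq n) (m n) (N n) (hle_m n) (hN_le n) hn.1 hn.2
    have h2 := (hBs n).sum_le_tsum (lags q (mseq n))
      (fun j _ => mul_nonneg (abs_nonneg _) (by linarith [hG1 n j]))
    simp only [hbd, probReal_univ, one_smul]
    gcongr
  have hpt : ∀ ω, |(∑ j ∈ lags q (mseq n),
      w (mseq n) j * acovHat1 ξ n j ω * g (acovHat1 ξ n j ω) (c n j)) -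
        ∑' j, acov1 ξ P j| ≤ C * Z1 ω + C * Z2 ω + b := by
    intro ω
    have hdec : (∑ j ∈ lags q (mseq n),
        w (mseq n) j * acovHat1 ξ n j ω * g (acovHat1 ξ n j ω) (c n j)) -
          ∑' j, acov1 ξ P j =
        ∑ j ∈ lags q (mseq n), w (mseq n) j * ((acovHat1 ξ n j ω - acov1 ξ P j) *
            g (acovHat1 ξ n j ω) (c n j)) -
          ∑ j ∈ lags q (mseq n), w (mseq n) j * (acov1 ξ P j *
            (1 - g (acovHat1 ξ n j ω) (c n j))) +
          ((∑ j ∈ lags q (mseq n), w (mseq n) j * acov1 ξ P j) - ∑' j, acov1 ξ P j) := by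
      rw [← add_sub_assoc, ← Finset.sum_sub_distrib, ← Finset.sum_add_distrib]
      congr 1
      exact Finset.sum_congr rfl fun j _ => by ring
    rw [hdec]
    refine (abs_add_le _ _).trans (add_le_add ((abs_sub _ _).trans (add_le_add ?_ ?_)) le_rfl)
    · rw [hZ1, Finset.mul_sum]
      refine (Finset.abs_sum_le_sum_abs _ _).trans (Finset.sum_le_sum fun j _ => ?_)
      have := hgrange (acovHat1 ξ n j ω) _ (hc n j)
      rw [abs_mul, abs_mul, abs_of_nonneg this.1]
      exact mul_le_mul (hC _ _) (mul_le_of_le_one_right (abs_nonneg _) this.2)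
        (mul_nonneg (abs_nonneg _) this.1) hC0
    · rw [hZ2, Finset.mul_sum]
      refine (Finset.abs_sum_le_sum_abs _ _).trans (Finset.sum_le_sum fun j _ => ?_)
      have := hgrange (acovHat1 ξ n j ω) _ (hc n j)
      rw [abs_mul, abs_mul, abs_of_nonneg (sub_nonneg.2 this.2)]
      exact mul_le_mul_of_nonneg_right (hC _ _)
        (mul_nonneg (abs_nonneg _) (sub_nonneg.2 this.2))
  -- Markov's inequality
  have hmarkov := mul_meas_ge_le_integral_of_nonneg (μ := P)
    (f := fun ω => C * Z1 ω + C * Z2 ω + b)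
    (Eventually.of_forall fun ω => add_nonneg (add_nonneg (mul_nonneg hC0 (hZ1n ω))
      (mul_nonneg hC0 (hZ2n ω))) (abs_nonneg _)) hZi ε
  calc _ ≤ P {ω | ε ≤ C * Z1 ω + C * Z2 ω + b} :=
        measure_mono fun ω (hω : ε < _) => hω.le.trans (hpt ω)
    _ = ENNReal.ofReal (P.real {ω | ε ≤ C * Z1 ω + C * Z2 ω + b}) := by
        rw [ofReal_measureReal]
    _ ≤ _ := by
        refine ENNReal.ofReal_le_ofReal ?_
        rw [le_div_iff₀ hε, mul_comm]
        exact hmarkov.trans hEZ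

end
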